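/- Let n be a positive integer, 0 < α < n, and p > 0. Suppose u is a positive function on ℝⁿ satisfying u(x) = ∫_{ℝⁿ} |x−y|^{−(n−α)} u(y)^p dy for all x ≠ 0, and define its Kelvin transform v(x) = |x|^{−(n−α)} u(x/|x|²) for x ≠ 0. Then v satisfies v(x) = ∫_{ℝⁿ} |x−y|^{−(n−α)} |y|^{−(n−α)(α*−p)} v(y)^p dy for all x ≠ 0, where α* = (n+α)/(n−α). -/

import Mathlib

open MeasureTheory

/-!
Write `n` for the dimension, `x* = x / |x|²` for the inversion in the unit sphere, and `K_s` for the
Kelvin transform `K_s f x = |x|^{-s} f(x*)`. Since `|x* - y*| = |x - y| / (|x| |y|)` and the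
Jacobian of the inversion at `y` is `|y|^{-2n}`, substituting `y*` for `y` in the Riesz potential
`I_s f x = ∫ |x - y|^{-s} f(y) dy` gives the intertwining relation `K_s I_s = I_s K_{2n-s}`.
Apply it with `s = n - α` to `u = I_s (u ^ p)`: the transform `K_{2n-s} (u ^ p)` equals
`(K_s u) ^ p` times the power `|y|^{sp - (2n - s)}`, whose exponent is `-(n - α)(α* - p)`.
-/

section Kelvin

open EuclideanGeometry Module

variable {E G : Type*} [NormedAddCommGroup E] [InnerProductSpace ℝ E]
  [NormedAddCommGroup G] [NormedSpace ℝ G]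

theorem abs_det_fderiv_inversion [FiniteDimensional ℝ E] {c x : E} (R : ℝ) (hx : x ≠ c) :
    |(fderiv ℝ (inversion c R) x).det| = (R / dist x c) ^ (2 * finrank ℝ E) := by
  have abs_det_reflection (K : Submodule ℝ E) :
      |(K.reflection : E →L[ℝ] E).toLinearMap.det| = 1 :=
    (congrArg abs K.det_reflection).trans (abs_neg_one_pow _)
  rw [(hasFDerivAt_inversion hx).fderiv, ContinuousLinearMap.det,
    ContinuousLinearMap.toLinearMap_smul, LinearMap.det_smul, abs_mul, abs_det_reflection,
    mul_one, ← pow_mul, abs_of_nonneg ((even_two_mul _).pow_nonneg _)]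

theorem rpow_norm_inversion_sub_inversion {x y : E} (hx : x ≠ 0) (hy : y ≠ 0) (s : ℝ) :
    ‖inversion 0 1 x - inversion 0 1 y‖ ^ s = ‖x - y‖ ^ s * ‖x‖ ^ (-s) * ‖y‖ ^ (-s) := by
  have norm_sub : ‖inversion 0 1 x - inversion 0 1 y‖ = ‖x - y‖ * ‖x‖⁻¹ * ‖y‖⁻¹ := by
    rw [← dist_eq_norm, dist_inversion_inversion hx hy, dist_zero_right, dist_zero_right,
      dist_eq_norm]
    field_simp
  rw [norm_sub, Real.mul_rpow (by positivity) (by positivity),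
    Real.mul_rpow (by positivity) (by positivity), Real.inv_rpow (norm_nonneg x),
    Real.inv_rpow (norm_nonneg y), ← Real.rpow_neg (norm_nonneg x),
    ← Real.rpow_neg (norm_nonneg y)]

/-- The Kelvin transform of exponent `s` centred at the origin; `inversion 0 1 x` is `x / |x|²`.
The transform of the integral equation of order `α` in dimension `n` has exponent `s = n - α`. -/
noncomputable def kelvinTransform (s : ℝ) (f : E → G) (x : E) : G :=
  ‖x‖ ^ (-s) • f (inversion 0 1 x)

theorem kelvinTransform_apply (s : ℝ) (f : E → G) (x : E) :
    kelvinTransform s f x = ‖x‖ ^ (-s) • f ((‖x‖ ^ 2)⁻¹ • x) := by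
  simp [kelvinTransform, inversion]

theorem kelvinTransform_rpow (s t p : ℝ) {f : E → ℝ} {x : E} (hx : x ≠ 0)
    (hf : 0 ≤ f (inversion 0 1 x)) :
    kelvinTransform t (fun y ↦ f y ^ p) x = ‖x‖ ^ (s * p - t) * kelvinTransform s f x ^ p := by
  have hx_pos : 0 < ‖x‖ := norm_pos_iff.2 hx
  simp only [kelvinTransform, smul_eq_mul]
  rw [Real.mul_rpow (by positivity) hf, ← Real.rpow_mul hx_pos.le, ← mul_assoc,
    ← Real.rpow_add hx_pos]
  ring_nf

variable [MeasurableSpace E]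

/-- The Riesz potential of `f` with kernel `|x - y|^{-s}`, without the usual normalising constant.
The potential of order `α` in dimension `n` is obtained for `s = n - α`. -/
noncomputable def rieszPotential (μ : Measure E) (s : ℝ) (f : E → G) (x : E) : G :=
  ∫ y, ‖x - y‖ ^ (-s) • f y ∂μ

variable [FiniteDimensional ℝ E] [BorelSpace E] (μ : Measure E) [μ.IsAddHaarMeasure]

theorem integral_comp_inversion [Nontrivial E] (c : E) {R : ℝ} (hR : R ≠ 0) (g : E → G) :
    ∫ y, (R / dist y c) ^ (2 * finrank ℝ E) • g (inversion c R y) ∂μ = ∫ y, g y ∂μ := by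
  have image_compl : inversion c R '' {c}ᶜ = {c}ᶜ := by
    rw [Set.image_compl_eq (inversion_bijective c hR), Set.image_singleton, inversion_self]
  calc ∫ y, (R / dist y c) ^ (2 * finrank ℝ E) • g (inversion c R y) ∂μ
    _ = ∫ y in {c}ᶜ, (R / dist y c) ^ (2 * finrank ℝ E) • g (inversion c R y) ∂μ := by
      rw [restrict_compl_singleton]
    _ = ∫ y in {c}ᶜ, |(fderiv ℝ (inversion c R) y).det| • g (inversion c R y) ∂μ :=
      setIntegral_congr_fun (measurableSet_singleton c).compl fun y hy ↦ by
        simp only [abs_det_fderiv_inversion R hy]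
    _ = ∫ y in inversion c R '' {c}ᶜ, g y ∂μ :=
      (integral_image_eq_integral_abs_det_fderiv_smul μ (measurableSet_singleton c).compl
        (fun _ hy ↦ (hasFDerivAt_inversion hy).differentiableAt.hasFDerivAt.hasFDerivWithinAt)
        (inversion_injective c hR).injOn g).symm
    _ = ∫ y, g y ∂μ := by rw [image_compl, restrict_compl_singleton]

theorem kelvinTransform_rieszPotential (s : ℝ) (f : E → G) {x : E} (hx : x ≠ 0) :
    kelvinTransform s (rieszPotential μ s f) x =
      rieszPotential μ s (kelvinTransform (2 * finrank ℝ E - s) f) x := by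
  have : Nontrivial E := ⟨x, 0, hx⟩
  have kernel_eq {y : E} (hy : y ≠ 0) :
      ‖x‖ ^ (-s) * ((1 / dist y 0) ^ (2 * finrank ℝ E) *
        ‖inversion 0 1 x - inversion 0 1 y‖ ^ (-s)) =
      ‖x - y‖ ^ (-s) * ‖y‖ ^ (-(2 * finrank ℝ E - s)) := by
    have hx_pos : 0 < ‖x‖ := norm_pos_iff.2 hx
    have hy_pos : 0 < ‖y‖ := norm_pos_iff.2 hy
    have jacobian_eq : (1 / dist y 0) ^ (2 * finrank ℝ E) = ‖y‖ ^ (-(2 * finrank ℝ E) : ℝ) := by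
      rw [dist_zero_right, one_div, inv_pow, Real.rpow_neg hy_pos.le]
      exact_mod_cast rfl
    rw [jacobian_eq, rpow_norm_inversion_sub_inversion hx hy, neg_neg, neg_sub', sub_neg_eq_add,
      Real.rpow_add hy_pos, Real.rpow_neg hx_pos.le]
    field_simp
  calc kelvinTransform s (rieszPotential μ s f) x
    _ = ‖x‖ ^ (-s) • ∫ y, (1 / dist y 0) ^ (2 * finrank ℝ E) •
          ‖inversion 0 1 x - inversion 0 1 y‖ ^ (-s) • f (inversion 0 1 y) ∂μ := by
      rw [integral_comp_inversion μ 0 one_ne_zero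
        fun y ↦ ‖inversion 0 1 x - y‖ ^ (-s) • f y]
      rfl
    _ = rieszPotential μ s (kelvinTransform (2 * finrank ℝ E - s) f) x := by
      rw [← integral_smul]
      refine integral_congr_ae ?_
      filter_upwards [Measure.ae_ne μ 0] with y hy
      simp only [kelvinTransform, smul_smul, kernel_eq hy]

theorem kelvin_transform_equation_general {α p : ℝ} (hα : α ≠ finrank ℝ E) {u v : E → ℝ}
    (hpos : ∀ x ≠ 0, 0 < u x)
    (heq : ∀ x ≠ 0, u x = ∫ y, ‖x - y‖ ^ (-(finrank ℝ E - α)) * u y ^ p ∂μ)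
    (hv : ∀ x ≠ 0, v x = ‖x‖ ^ (-(finrank ℝ E - α)) * u ((‖x‖ ^ 2)⁻¹ • x)) :
    ∀ x ≠ 0, v x = ∫ y, ‖x - y‖ ^ (-(finrank ℝ E - α)) *
      ‖y‖ ^ (-(finrank ℝ E - α) * ((finrank ℝ E + α) / (finrank ℝ E - α) - p)) * v y ^ p ∂μ := by
  intro x hx
  have : Nontrivial E := ⟨x, 0, hx⟩
  set n := (finrank ℝ E : ℝ)
  have inversion_ne_zero {y : E} (hy : y ≠ 0) : inversion 0 1 y ≠ 0 :=
    (inversion_eq_center one_ne_zero).not.2 hy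
  have v_eq {y : E} (hy : y ≠ 0) : v y = kelvinTransform (n - α) u y :=
    (hv y hy).trans (kelvinTransform_apply _ u y).symm
  have exponent_eq :
      (n - α) * p - (2 * n - (n - α)) = -(n - α) * ((n + α) / (n - α) - p) := by
    have : n - α ≠ 0 := sub_ne_zero.2 hα.symm
    field_simp
    ring
  calc v x
    _ = kelvinTransform (n - α) (rieszPotential μ (n - α) fun y ↦ u y ^ p) x := by
      rw [v_eq hx, kelvinTransform, heq _ (inversion_ne_zero hx)]
      rfl
    _ = rieszPotential μ (n - α) (kelvinTransform (2 * n - (n - α)) fun y ↦ u y ^ p) x :=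
      kelvinTransform_rieszPotential μ _ _ hx
    _ = _ := by
      refine integral_congr_ae ?_
      filter_upwards [Measure.ae_ne μ 0] with y hy
      rw [kelvinTransform_rpow (n - α) _ p hy (hpos _ (inversion_ne_zero hy)).le, exponent_eq,
        v_eq hy, smul_eq_mul, mul_assoc]

end Kelvin

/-- The Kelvin transform `v(x) = |x|^{-(n-α)} u(x/|x|²)` of a solution `u`
of the integral equation satisfies the transformed equation with the weight
`|y|^{-(n-α)(α* - p)}`, where `α* = (n+α)/(n-α)`. -/
theorem kelvin_transform_equation
    (n : ℕ) (hn : 0 < n) (α p : ℝ) (hα0 : 0 < α) (hαn : α < n) (hp : 0 < p)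
    (u v : EuclideanSpace ℝ (Fin n) → ℝ)
    (hpos : ∀ x, 0 < u x)
    (heq : ∀ x ≠ (0 : EuclideanSpace ℝ (Fin n)),
      u x = ∫ y : EuclideanSpace ℝ (Fin n),
        ‖x - y‖ ^ (-((n : ℝ) - α)) * u y ^ p)
    (hv : ∀ x ≠ (0 : EuclideanSpace ℝ (Fin n)),
      v x = ‖x‖ ^ (-((n : ℝ) - α)) * u ((‖x‖ ^ 2)⁻¹ • x)) :
    ∀ x ≠ (0 : EuclideanSpace ℝ (Fin n)),
      v x = ∫ y : EuclideanSpace ℝ (Fin n),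
        ‖x - y‖ ^ (-((n : ℝ) - α)) *
          ‖y‖ ^ (-((n : ℝ) - α) * (((n : ℝ) + α) / ((n : ℝ) - α) - p)) *
          v y ^ p := by
  simpa only [finrank_euclideanSpace_fin] using
    kelvin_transform_equation_general (E := EuclideanSpace ℝ (Fin n)) volume
      (by simpa using hαn.ne) (fun x _ ↦ hpos x) (by simpa using heq) (by simpa using hv)
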